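/- Let a ∈ ℝ be not badly approximable and let T be the skew shift on the torus 𝕋² = ℝ²/ℤ² given by T(ω₁, ω₂) = (ω₁ + 2a, ω₁ + ω₂) (mod ℤ²). Then (𝕋², T) satisfies (eGRP): for every (ω₁, ω₂) ∈ 𝕋², every ε > 0, and every s > 0, there exists an even integer q ≥ 2 such that dist(T^k(ω₁, ω₂), T^{k+q}(ω₁, ω₂)) < ε for all integers 0 ≤ k ≤ ⌊s·q⌋. -/

import Mathlib

open MeasureTheory Filter Metric Topology

noncomputable section

/-- A point `ω` has the even repetition property for `T` if for every `ε > 0` and `s > 0`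
there is an even integer `q ≥ 2` with `dist (T^k ω, T^{k+q} ω) < ε` for all `0 ≤ k ≤ ⌊s·q⌋`. -/
def EvenRepetitionProperty {Ω : Type*} [PseudoMetricSpace Ω] (T : Ω → Ω) (ω : Ω) : Prop :=
  ∀ ε > (0 : ℝ), ∀ s > (0 : ℝ), ∃ q : ℕ, Even q ∧ 2 ≤ q ∧
    ∀ k : ℕ, k ≤ ⌊s * (q : ℝ)⌋₊ → dist (T^[k] ω) (T^[k + q] ω) < ε

/-- `a ∈ ℝ` is badly approximable if `dist (q·a, ℤ) > c/|q|` for some `c > 0` and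
all nonzero integers `q`. -/
def BadlyApproximable (a : ℝ) : Prop :=
  ∃ c > 0, ∀ q : ℤ, q ≠ 0 →
    c / |(q : ℝ)| < |(q : ℝ) * a - round ((q : ℝ) * a)|

/-- The skew shift `T(ω₁, ω₂) = (ω₁ + 2a, ω₁ + ω₂)` on the torus `𝕋² = (ℝ/ℤ)²`. -/
def skewShift (a : ℝ) (p : AddCircle (1 : ℝ) × AddCircle (1 : ℝ)) :
    AddCircle (1 : ℝ) × AddCircle (1 : ℝ) :=
  (p.1 + ((2 * a : ℝ) : AddCircle (1 : ℝ)), p.1 + p.2)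

theorem skewShift_iterate (a : ℝ) (p : AddCircle (1 : ℝ) × AddCircle (1 : ℝ)) (k : ℕ) :
    (skewShift a)^[k] p =
      (p.1 + (2 * (k : ℤ)) • (a : AddCircle (1 : ℝ)),
       p.2 + (k : ℤ) • p.1 + ((k : ℤ) * ((k : ℤ) - 1)) • (a : AddCircle (1 : ℝ))) := by
  have h2 : ((2 * a : ℝ) : AddCircle (1 : ℝ)) = (2 : ℤ) • (a : AddCircle (1 : ℝ)) := by
    rw [two_mul, AddCircle.coe_add, two_zsmul]
  induction k with
  | zero => simp
  | succ k ih =>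
    rw [Function.iterate_succ_apply', ih]
    simp only [skewShift, h2]
    ext1
    · push_cast; module
    · push_cast; module

theorem norm_zsmul_le_of_nat {E : Type*} [SeminormedAddCommGroup E] (n : ℕ) (x : E) :
    ‖(n : ℤ) • x‖ ≤ (n : ℝ) * ‖x‖ := by
  rw [natCast_zsmul]; exact norm_nsmul_le

/-- If `a` is not badly approximable then the skew shift on `𝕋²` satisfies (eGRP). -/
theorem skew_shift_eGRP_of_not_badlyApproximable (a : ℝ) (hnba : ¬ BadlyApproximable a) :
    ∀ ω : AddCircle (1 : ℝ) × AddCircle (1 : ℝ),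
      EvenRepetitionProperty (skewShift a) ω := by
  intro ω ε hε s hs
  obtain ⟨M, hM⟩ := exists_nat_gt (2 / ε)
  have hMpos : (0 : ℝ) < M := lt_trans (by positivity) hM
  have hM0 : 0 < M := by exact_mod_cast hMpos
  have hD : (0 : ℝ) < 4 * (M : ℝ) ^ 2 * (1 + 2 * s) := by positivity
  set c : ℝ := ε / 4 / (4 * (M : ℝ) ^ 2 * (1 + 2 * s)) with hc
  have hcpos : 0 < c := by positivity
  have hcM : 4 * (M : ℝ) ^ 2 * (1 + 2 * s) * c = ε / 4 := by
    rw [hc]; field_simp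
  set A : AddCircle (1 : ℝ) := (a : AddCircle (1 : ℝ)) with hA
  -- a good denominator
  have hz : ∃ z : ℤ, z ≠ 0 ∧ ‖z • A‖ ≤ c / |(z : ℝ)| := by
    by_contra hcon
    push Not at hcon
    refine hnba ⟨c, hcpos, fun z hz => ?_⟩
    have := hcon z hz
    rwa [hA, ← AddCircle.coe_zsmul, AddCircle.norm_eq, zsmul_eq_mul, inv_one, one_mul,
      mul_one] at this
  obtain ⟨n, hn, hnA⟩ : ∃ n : ℕ, 0 < n ∧ (n : ℝ) * ‖(n : ℤ) • A‖ ≤ c := by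
    obtain ⟨z, hz0, hz⟩ := hz
    refine ⟨z.natAbs, Int.natAbs_pos.mpr hz0, ?_⟩
    have h1 : ‖(z.natAbs : ℤ) • A‖ = ‖z • A‖ := by
      rcases Int.natAbs_eq z with h | h
      · rw [← h]
      · rw [show (z.natAbs : ℤ) = -z by omega, neg_smul, norm_neg]
    have hzp : (0 : ℝ) < |(z : ℝ)| := abs_pos.mpr (by exact_mod_cast hz0)
    rw [h1, Nat.cast_natAbs, Int.cast_abs]
    rw [le_div_iff₀ hzp] at hz
    linarith
  obtain ⟨m, hm, hmω⟩ := AddCircle.exists_norm_nsmul_le (T := (1 : ℝ)) ((2 * n) • ω.1) hM0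
  rw [Set.mem_Icc] at hm
  push_cast at hmω
  have hq2 : 2 ≤ 2 * (m * n) := by
    have := Nat.mul_pos hm.1 hn
    omega
  have hmM : (m : ℝ) ≤ M := by exact_mod_cast hm.2
  have hn0 : (0 : ℝ) < n := by exact_mod_cast hn
  obtain ⟨q, hq⟩ : ∃ q : ℕ, q = 2 * (m * n) := ⟨_, rfl⟩
  have hqR : (q : ℝ) = 2 * (m * n) := by rw [hq]; push_cast; ring
  have hq2R : (2 : ℝ) ≤ q := by rw [hq]; exact_mod_cast hq2
  have hqω : ‖(q : ℤ) • ω.1‖ < ε / 2 := by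
    have h1 : (q : ℤ) • ω.1 = m • (2 * n) • ω.1 := by
      rw [natCast_zsmul, ← mul_smul, hq]; congr 1; ring
    rw [h1]
    refine lt_of_le_of_lt hmω ?_
    rw [div_lt_iff₀ hε] at hM
    rw [div_lt_iff₀ (by positivity)]
    nlinarith
  have hqA : (q : ℝ) * ‖(q : ℤ) • A‖ ≤ 4 * (M : ℝ) ^ 2 * c := by
    have h1 : (q : ℤ) • A = ((2 * m : ℕ) : ℤ) • (n : ℤ) • A := by
      rw [← mul_smul, hq]; congr 1; push_cast; ring
    have h2 := norm_zsmul_le_of_nat (2 * m) ((n : ℤ) • A)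
    rw [← h1] at h2
    push_cast at h2
    calc (q : ℝ) * ‖(q : ℤ) • A‖ ≤ q * (2 * m * ‖(n : ℤ) • A‖) := by gcongr
      _ = 4 * (m : ℝ) ^ 2 * (n * ‖(n : ℤ) • A‖) := by rw [hqR]; ring
      _ ≤ 4 * (M : ℝ) ^ 2 * c := by gcongr
  have hfin : (1 + 2 * s) * (q * ‖(q : ℤ) • A‖) ≤ ε / 4 := by
    calc (1 + 2 * s) * (q * ‖(q : ℤ) • A‖) ≤ (1 + 2 * s) * (4 * (M : ℝ) ^ 2 * c) := by gcongr
      _ = ε / 4 := by rw [← hcM]; ring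
  have hN := norm_nonneg ((q : ℤ) • A)
  refine ⟨q, ⟨m * n, by omega⟩, by omega, fun k hk => ?_⟩
  have hk' : (k : ℝ) ≤ s * q := (Nat.le_floor_iff (by positivity)).mp hk
  rw [skewShift_iterate, skewShift_iterate, dist_comm, Prod.dist_eq, max_lt_iff,
    dist_eq_norm, dist_eq_norm]
  constructor
  · have h1 : ω.1 + (2 * ((k + q : ℕ) : ℤ)) • A - (ω.1 + (2 * (k : ℤ)) • A)
        = ((2 : ℕ) : ℤ) • (q : ℤ) • A := by
      push_cast; module
    simp only [← hA]
    rw [h1]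
    refine lt_of_le_of_lt (norm_zsmul_le_of_nat _ _) ?_
    push_cast
    have : 0 ≤ s * (q * ‖(q : ℤ) • A‖) := by positivity
    nlinarith
  · have h1 : ω.2 + ((k + q : ℕ) : ℤ) • ω.1
          + (((k + q : ℕ) : ℤ) * (((k + q : ℕ) : ℤ) - 1)) • A
          - (ω.2 + (k : ℤ) • ω.1 + ((k : ℤ) * ((k : ℤ) - 1)) • A)
        = (q : ℤ) • ω.1 + ((2 * k + (q - 1) : ℕ) : ℤ) • (q : ℤ) • A := by
      rw [Nat.cast_add (2 * k), Nat.cast_sub (by omega : 1 ≤ q)]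
      push_cast; module
    simp only [← hA]
    rw [h1]
    refine lt_of_le_of_lt (norm_add_le _ _) ?_
    have h2 := norm_zsmul_le_of_nat (2 * k + (q - 1)) ((q : ℤ) • A)
    have h3 : ((2 * k + (q - 1) : ℕ) : ℝ) ≤ (1 + 2 * s) * q := by
      rw [Nat.cast_add (2 * k), Nat.cast_sub (by omega : 1 ≤ q)]
      push_cast; linarith
    have h4 := mul_le_mul_of_nonneg_right h3 hN
    linarith

end
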